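/- arXiv:2604.10869 — 4 statements merged into one kernel-verified Lean document; each statement's English description precedes it below -/
import Mathlib

section
/- With notation as in the context, for every j ∈ {1,…,m} each coefficient of the polynomial P_j is fixed by every element of G = Gal(E/L); equivalently, P_j lies in the image of L[x] inside E[x]. -/
/-!
An automorphism `g` of `E` over `L` permutes the roots `θ i` of `f`, say `g (θ i) = θ (σ i)`, and
hence sends the Lagrange polynomial `p i` to `p (σ i)`. As `g` fixes the coefficients of the
factors `fj j`, the root `θ (σ i)` is again a root of `fj (J i)`; by separability of `f` distinct
factors are coprime and share no root, so `J (σ i) = J i`. Thus `g` merely permutes the summands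
of `P j`. Since `E / K` is Galois, coefficients fixed by all such `g` lie in `L`.
-/

open Polynomial

/-- An injective family of `natDegree f` roots exhausts the roots of `f`, so every automorphism
permutes its indices. -/
lemma exists_perm_of_roots {K E : Type*} [Field K] [Field E] [Algebra K E] {n : ℕ}
    {f : K[X]} (hf : f ≠ 0) (hf_deg : f.natDegree = n)
    {θ : Fin n → E} (hθ_inj : Function.Injective θ)
    (hθ_root : ∀ i, aeval (θ i) f = 0) (g : E ≃ₐ[K] E) :
    ∃ σ : Equiv.Perm (Fin n), ∀ i, g (θ i) = θ (σ i) := by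
  classical
  have hsub : Finset.univ.image θ ⊆ (f.aroots E).toFinset := by
    intro x hx
    obtain ⟨i, -, rfl⟩ := Finset.mem_image.1 hx
    simpa [mem_aroots, hf] using hθ_root i
  have heq : Finset.univ.image θ = (f.aroots E).toFinset := by
    refine Finset.eq_of_subset_of_card_le hsub ?_
    rw [Finset.card_image_of_injective _ hθ_inj, Finset.card_univ, Fintype.card_fin, ← hf_deg]
    refine (Multiset.toFinset_card_le _).trans ((card_roots' _).trans ?_)
    rw [natDegree_map]
  have hex : ∀ i, ∃ k, θ k = g (θ i) := by
    intro i
    have hmem : g (θ i) ∈ Finset.univ.image θ := by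
      rw [heq, Multiset.mem_toFinset, mem_aroots]
      refine ⟨hf, ?_⟩
      rw [← AlgEquiv.coe_toAlgHom, aeval_algHom_apply, hθ_root, map_zero]
    simpa using hmem
  choose s hs using hex
  have hs_inj : Function.Injective s := by
    intro a b hab
    apply hθ_inj
    apply g.injective
    rw [← hs, ← hs, hab]
  exact ⟨Equiv.ofBijective s (Finite.injective_iff_bijective.1 hs_inj), fun i => (hs i).symm⟩

theorem stmt_2
    {K E : Type*} [Field K] [Field E] [Algebra K E]
    (n m : ℕ) (hn : 0 < n)
    (f : K[X]) (hf_irr : Irreducible f) (hf_sep : f.Separable)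
    (hf_deg : f.natDegree = n)
    (hf_split : Polynomial.IsSplittingField K E f)
    (θ : Fin n → E) (hθ_inj : Function.Injective θ)
    (hθ_root : ∀ i, Polynomial.aeval (θ i) f = 0)
    (L : IntermediateField K E)
    (hL : L = IntermediateField.adjoin K {θ ⟨0, hn⟩})
    (fj : Fin m → Polynomial L)
    (hfj_monic : ∀ j, (fj j).Monic)
    (hfj_irr : ∀ j, Irreducible (fj j))
    (hfact : f.map (algebraMap K L) = ∏ j, fj j)
    (J : Fin n → Fin m)
    (hJ : ∀ i, Polynomial.aeval (θ i) (fj (J i)) = 0)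
    (p : Fin n → Polynomial E)
    (hp : ∀ i, p i = ∏ k ∈ Finset.univ.erase i,
        (Polynomial.C (θ i - θ k)⁻¹ * (Polynomial.X - Polynomial.C (θ k))))
    (P : Fin m → Polynomial E)
    (hP : ∀ j, P j = ∑ i ∈ Finset.univ.filter (fun i => J i = j), p i)
    :
    (∀ (j : Fin m), ∀ g ∈ L.fixingSubgroup, ∀ k : ℕ,
        g ((P j).coeff k) = (P j).coeff k) ∧
    (∀ j : Fin m, ∃ q : Polynomial L, P j = q.map (algebraMap L E)) := by
  classical
  have hfix : ∀ (j : Fin m), ∀ g ∈ L.fixingSubgroup, (P j).map (g : E →+* E) = P j := by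
    intro j g hg
    obtain ⟨σ, hσ⟩ := exists_perm_of_roots hf_irr.ne_zero hf_deg hθ_inj hθ_root g
    have hJu : ∀ i j, aeval (θ i) (fj j) = 0 → J i = j := by
      intro i j hij
      by_contra hne
      have hsep : (∏ j, fj j).Separable := hfact ▸ hf_sep.map
      have hdvd : fj (J i) * fj j ∣ ∏ j, fj j := by
        rw [← Finset.prod_pair hne]
        exact Finset.prod_dvd_prod_of_subset _ _ _ (Finset.subset_univ _)
      obtain ⟨a, b, hab⟩ := (hsep.of_dvd hdvd).isCoprime
      have h1 := congrArg (aeval (θ i)) hab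
      simp [hJ, hij] at h1
    have hJσ : ∀ i, J (σ i) = J i := by
      intro i
      apply hJu
      have hgL : (g : E →+* E).comp (algebraMap L E) = algebraMap L E := by
        ext x
        exact (IntermediateField.mem_fixingSubgroup_iff L g).1 hg x x.2
      have h2 := congrArg (g : E →+* E) (hJ i)
      rw [aeval_def, hom_eval₂, hgL, map_zero] at h2
      rw [← hσ, aeval_def]
      exact h2
    have hpσ : ∀ i, (p i).map (g : E →+* E) = p (σ i) := by
      intro i
      rw [hp, hp, Polynomial.map_prod]
      refine Finset.prod_equiv σ (by simp) ?_
      intro k _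
      simp [hσ]
    rw [hP, Polynomial.map_sum]
    refine Finset.sum_equiv σ (by simp [hJσ]) ?_
    intro i _
    exact hpσ i
  have hcoeff : ∀ (j : Fin m), ∀ g ∈ L.fixingSubgroup, ∀ k : ℕ,
      g ((P j).coeff k) = (P j).coeff k := by
    intro j g hg k
    have h := congrArg (fun q => q.coeff k) (hfix j g hg)
    simpa [coeff_map] using h
  refine ⟨hcoeff, fun j => ?_⟩
  have hgal : IsGalois K E := IsGalois.of_separable_splitting_field hf_sep
  have hfd : FiniteDimensional K E := IsSplittingField.finiteDimensional E f
  have hlift : P j ∈ lifts (algebraMap L E) := by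
    rw [lifts_iff_coeff_lifts]
    intro k
    have hmem : (P j).coeff k ∈ IntermediateField.fixedField L.fixingSubgroup :=
      (IntermediateField.mem_fixedField_iff _ _).2 fun g hg => hcoeff j g hg k
    rw [IsGalois.fixedField_fixingSubgroup] at hmem
    exact ⟨⟨_, hmem⟩, rfl⟩
  obtain ⟨q, hq⟩ := (mem_lifts _).1 hlift
  exact ⟨q, hq.symm⟩
end

section
/- If L is a finite field extension of a field K that is not separable over K, then the ring L ⊗_K L is not a semisimple ring. -/
/-! The diagonal ideal `I`, the kernel of multiplication `L ⊗[K] L → L`, is a direct summand when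
`L ⊗[K] L` is semisimple, hence is idempotent. Thus `Ω[L⁄K] = I / I ^ 2` vanishes, so `L/K` is
formally unramified, which for a finite field extension means separable. -/

open TensorProduct

/-- In a semisimple commutative ring write `1 = i + j` along `I ⊕ J`; then `x = x * i` for every
`x ∈ I`. -/
lemma isIdempotentElem_ideal_of_isSemisimpleRing {R : Type*} [CommRing R] [IsSemisimpleRing R]
    (I : Ideal R) : IsIdempotentElem I := by
  refine le_antisymm Ideal.mul_le_left fun x hx => ?_
  obtain ⟨J, hJ⟩ := exists_isCompl I
  have h1 : (1 : R) ∈ I ⊔ J := by rw [hJ.sup_eq_top]; trivial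
  obtain ⟨i, hi, j, hj, hij⟩ := Submodule.mem_sup.mp h1
  have hxj : x * j = 0 := by
    have : x * j ∈ I ⊓ J := ⟨I.mul_mem_right _ hx, J.mul_mem_left _ hj⟩
    rwa [hJ.inf_eq_bot] at this
  have hxi : x = x * i := by rw [← add_zero (x * i), ← hxj, ← mul_add, hij, mul_one]
  rw [hxi]
  exact Ideal.mul_mem_mul hx hi

/-- If `L/K` is a finite inseparable field extension, then `L ⊗[K] L` is not
a semisimple ring. -/
theorem stmt_7
    {K L : Type*} [Field K] [Field L] [Algebra K L]
    [FiniteDimensional K L]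
    (h : ¬ Algebra.IsSeparable K L) :
    ¬ IsSemisimpleRing (L ⊗[K] L) := by
  intro hs
  apply h
  have : Algebra.FormallyUnramified K L :=
    ⟨(Ideal.cotangent_subsingleton_iff _).mpr
      (isIdempotentElem_ideal_of_isSemisimpleRing (KaehlerDifferential.ideal K L))⟩
  exact Algebra.FormallyUnramified.isSeparable K L
end

section
/- The third group cohomology H³(Gal(ℂ/ℝ), ℂˣ), where the Galois group Gal(ℂ/ℝ) acts on the unit group ℂˣ by its natural (conjugation) action, is trivial (i.e., the zero group). -/
/-!
The group `Gal(ℂ/ℝ)` is cyclic, generated by complex conjugation, so the cohomology of any module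
over it is periodic: every odd cohomology group is `Ker N / Im (σ - 1)`. Hence `H³` is isomorphic
to `H¹`, and `H¹(Gal(ℂ/ℝ), ℂˣ)` vanishes by Hilbert's theorem 90.
-/

open CategoryTheory

/-- For a finite cyclic group, `Hⁱ` and `Hʲ` agree for odd `i` and `j`. Commutativity is
deduced from `hg` rather than taken from an instance, so that the lemma applies to automorphism groups, whose
`Group` instance does not come from a `CommGroup` instance. -/
lemma groupCohomology_iso_of_odd {k G : Type} [CommRing k] [inst : Group G] [Finite G]
    (A : Rep k G) (g : G) (hg : ∀ x, x ∈ Subgroup.zpowers g) {i j : ℕ} (hi : Odd i) (hj : Odd j) :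
    Nonempty (groupCohomology A i ≅ groupCohomology A j) := by
  obtain ⟨c, hc⟩ : ∃ c : CommGroup G, c.toGroup = inst := by
    refine ⟨{ inst with mul_comm := fun a b => ?_ }, rfl⟩
    obtain ⟨m, rfl⟩ := hg a
    obtain ⟨n, rfl⟩ := hg b
    exact zpow_mul_comm g m n
  subst hc
  have := Fintype.ofFinite G
  exact ⟨Rep.FiniteCyclicGroup.groupCohomologyIsoOdd A g hg i hi ≪≫
    (Rep.FiniteCyclicGroup.groupCohomologyIsoOdd A g hg j hj).symm⟩

lemma mem_zpowers_conjAe (x : ℂ ≃ₐ[ℝ] ℂ) : x ∈ Subgroup.zpowers Complex.conjAe := by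
  rcases Complex.real_algHom_eq_id_or_conj (x : ℂ →ₐ[ℝ] ℂ) with h | h
  · have : x = 1 := AlgEquiv.ext fun z => DFunLike.congr_fun h z
    exact this ▸ one_mem _
  · have : x = Complex.conjAe := AlgEquiv.ext fun z => DFunLike.congr_fun h z
    exact this ▸ Subgroup.mem_zpowers _

/-- `H³(Gal(ℂ/ℝ), ℂˣ)` with the natural Galois action is trivial. -/
theorem stmt_9 :
    Subsingleton (groupCohomology (Rep.ofMulDistribMulAction (ℂ ≃ₐ[ℝ] ℂ) ℂˣ) 3) := by
  obtain ⟨e⟩ := groupCohomology_iso_of_odd (Rep.ofMulDistribMulAction (ℂ ≃ₐ[ℝ] ℂ) ℂˣ)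
    Complex.conjAe mem_zpowers_conjAe (i := 3) (j := 1) (by decide) (by decide)
  -- the coefficient module is definitionally the one in Noether's form of Hilbert's theorem 90
  have : Subsingleton (groupCohomology (Rep.ofMulDistribMulAction (ℂ ≃ₐ[ℝ] ℂ) ℂˣ) 1) :=
    (groupCohomology.H1ofAutOnUnitsUnique ℝ ℂ).instSubsingleton
  exact e.toLinearEquiv.toEquiv.subsingleton
end

section
/- The second group cohomology H²((ℤ/2ℤ)², ℝˣ) of the Klein four-group with coefficients in the multiplicative group ℝˣ equipped with the trivial action is isomorphic as an abelian group to (ℤ/2ℤ)³. -/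
/-!
A 2-cocycle `f` with values in the trivial module `ℝˣ` describes a central extension `E` of the
Klein four-group `V`, and the square of a lift of `g ∈ V` to `E` is `f (g, g) / f (1, 1)` up to
squares in `ℝˣ`. Since `ℝˣ` modulo squares is `{±1}`, the signs of these quantities at the three
nontrivial elements of `V` define a homomorphism `squareSigns` from 2-cocycles to `(ℤ/2ℤ)³`.
The theorem follows because this homomorphism is onto and its kernel is the group of coboundaries.

* Coboundaries are killed, since the coboundary of `x` gives the squares `(x g / x 1) ^ 2`.
* Conversely, if all three signs are positive, one can choose lifts `a`, `b`, `c` of square `1`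
  and write `a b = t c`. Associativity gives `t ^ 4 = 1`, so `t ^ 2 = 1` in `ℝˣ`. Then `a` and `b`
  commute, and `1, a, b, a b` is a section of `E → V` which is a homomorphism. This is
  `exists_cochain_of_diag_eq_double`.
* A bilinear form `B : V × V → ℤ/2ℤ` gives the cocycle `(-1) ^ B`, whose signs are the values
  `B (g, g)`. Every triple of values on the nontrivial elements arises from some `B`.
-/

open groupCohomology

/-- The sign character of `ℝˣ`, written additively: `1` on negative reals and `0` on
positive ones. -/
noncomputable def realSignHom : Additive ℝˣ →+ ZMod 2 where
  toFun x := if (x.toMul : ℝ) < 0 then 1 else 0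
  map_zero' := by simp
  map_add' x y := by
    have hx : (x.toMul : ℝ) ≠ 0 := Units.ne_zero _
    have hy : (y.toMul : ℝ) ≠ 0 := Units.ne_zero _
    simp only [toMul_add, Units.val_mul, mul_neg_iff]
    rcases hx.lt_or_gt with hx | hx <;> rcases hy.lt_or_gt with hy | hy <;>
      simp [hx, hy, not_lt_of_gt]
    decide

/-- The homomorphism `n ↦ (-1) ^ n` from `ℤ/2ℤ` to `ℝˣ`, a section of `realSignHom`. -/
noncomputable def negOneHom : ZMod 2 →+ Additive ℝˣ :=
  ZMod.lift 2 ⟨zmultiplesHom _ (Additive.ofMul (-1)), by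
    apply Additive.toMul.injective; simp⟩

lemma realSignHom_negOneHom (n : ZMod 2) : realSignHom (negOneHom n) = n := by
  have h1 : negOneHom 1 = Additive.ofMul (-1) := by
    have := ZMod.lift_coe 2 ⟨zmultiplesHom (Additive ℝˣ) (Additive.ofMul (-1)), by
      apply Additive.toMul.injective; simp⟩ 1
    simpa [negOneHom] using this
  have : ∀ m : ZMod 2, m = 0 ∨ m = 1 := by decide
  rcases this n with rfl | rfl
  · simp
  · simp [h1, realSignHom]

lemma exists_add_self_of_realSignHom_eq_zero {x : Additive ℝˣ} (h : realSignHom x = 0) :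
    ∃ y, x = y + y := by
  have hx : (x.toMul : ℝ) ≠ 0 := Units.ne_zero _
  have hpos : 0 < (x.toMul : ℝ) := by
    by_contra hn
    have : (x.toMul : ℝ) < 0 := lt_of_le_of_ne (not_lt.1 hn) hx
    simp [realSignHom, this] at h
  refine ⟨Additive.ofMul (Units.mk0 (√(x.toMul : ℝ)) (Real.sqrt_pos.2 hpos).ne'), ?_⟩
  apply Additive.toMul.injective
  ext
  simp [Real.mul_self_sqrt hpos.le]

lemma add_self_eq_zero_of_four_mul_eq_zero {x : Additive ℝˣ} (h : x + x + (x + x) = 0) :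
    x + x = 0 := by
  have h' : ((x.toMul : ℝ) ^ 2) ^ 2 = 1 := by
    have := congrArg (fun y : Additive ℝˣ => (y.toMul : ℝ)) h
    simp at this
    linarith
  have h2 : (x.toMul : ℝ) ^ 2 = 1 := by
    nlinarith [sq_nonneg (x.toMul : ℝ)]
  apply Additive.toMul.injective
  ext
  simpa [sq] using h2

/-- A 2-cocycle `f` on the Klein four-group with values in an abelian group `A` in which `4 x = 0`
implies `2 x = 0` is a coboundary as soon as all differences `f g g - f 0 0` are divisible by `2`.
Both groups are written additively. -/
lemma exists_cochain_of_diag_eq_double {A : Type*} [AddCommGroup A]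
    (f : ZMod 2 × ZMod 2 → ZMod 2 × ZMod 2 → A)
    (hf : ∀ g h j, f (g + h) j + f g h = f h j + f g (h + j))
    (hA : ∀ x : A, x + x + (x + x) = 0 → x + x = 0)
    (hd : ∀ g, ∃ u, f g g - f 0 0 = u + u) :
    ∃ x : ZMod 2 × ZMod 2 → A, ∀ g h, x h - x (g + h) + x g = f g h := by
  have hall : ∀ g : ZMod 2 × ZMod 2, g = (0,0) ∨ g = (1,0) ∨ g = (0,1) ∨ g = (1,1) := by decide
  have h1 (g) : f 0 g = f 0 0 := by have := hf 0 0 g; simp at this; exact this.symm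
  have h2 (g) : f g 0 = f 0 0 := by have := hf g 0 0; simpa using this
  have e1 : ((1,0) + (1,0) : ZMod 2 × ZMod 2) = 0 := by decide
  have e2 : ((0,1) + (0,1) : ZMod 2 × ZMod 2) = 0 := by decide
  have e3 : ((1,1) + (1,1) : ZMod 2 × ZMod 2) = 0 := by decide
  have e4 : ((1,0) + (0,1) : ZMod 2 × ZMod 2) = (1,1) := by decide
  have e5 : ((0,1) + (1,0) : ZMod 2 × ZMod 2) = (1,1) := by decide
  have e6 : ((1,0) + (1,1) : ZMod 2 × ZMod 2) = (0,1) := by decide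
  have e7 : ((0,1) + (1,1) : ZMod 2 × ZMod 2) = (1,0) := by decide
  have e8 : ((1,1) + (1,0) : ZMod 2 × ZMod 2) = (0,1) := by decide
  have e9 : ((1,1) + (0,1) : ZMod 2 × ZMod 2) = (1,0) := by decide
  have e0 : ((0,0) : ZMod 2 × ZMod 2) = 0 := rfl
  obtain ⟨u, hu⟩ := hd (1,0)
  obtain ⟨v, hv⟩ := hd (0,1)
  obtain ⟨w, hw⟩ := hd (1,1)
  have c1 := hf (1,0) (1,0) (0,1)
  have c3 := hf (0,1) (0,1) (1,0)
  have c7 := hf (1,0) (0,1) (0,1)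
  have c8 := hf (0,1) (1,0) (1,0)
  have c9 := hf (1,0) (0,1) (1,0)
  have c11 := hf (1,0) (0,1) (1,1)
  simp only [e1, e2, e4, e5, e7, h1, h2] at c1 c3 c7 c8 c9 c11
  have ha : f (1,0) (1,0) = u + u + f 0 0 := by rw [← hu]; abel
  have hb : f (0,1) (0,1) = v + v + f 0 0 := by rw [← hv]; abel
  have hc : f (1,1) (1,1) = w + w + f 0 0 := by rw [← hw]; abel
  rw [ha] at c1 c8 c11
  rw [hb] at c3 c7
  rw [hc] at c11
  -- With `f 0 0 = 0`, the argument of `hA` is, up to sign, the defect comparing the product of the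
  -- corrected lifts of `(1,0)` and `(0,1)` with the corrected lift of `(1,1)`.
  have key := hA (u + v - w + f 0 0 - f (1,0) (0,1)) (by
    linear_combination (norm := module) (-1 : ℤ) • c9 - (2 : ℤ) • c11 + (2 : ℤ) • c3 + c8 + c1)
  have hs : f (0,1) (1,0) = f (1,0) (0,1) := by
    linear_combination (norm := module) c11 - c3 + key
  rw [hs] at c3 c8
  -- The values at `(1,0)` and `(0,1)` correct the lifts to have square `1`; the value at `(1,1)` is
  -- forced by the coboundary equation at `((1,0), (0,1))`.
  refine ⟨fun g => if g = 0 then f 0 0 else if g = (1,0) then u + f 0 0 else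
    if g = (0,1) then v + f 0 0 else u + v + f 0 0 + f 0 0 - f (1,0) (0,1), ?_⟩
  intro g h
  rcases hall g with rfl | rfl | rfl | rfl <;> rcases hall h with rfl | rfl | rfl | rfl <;>
    simp only [e0, e1, e2, e3, e4, e5, e6, e7, e8, e9, h1, h2, zero_add, add_zero] <;>
    simp [ha, hb, hc, hs] <;>
    first
    | module
    | linear_combination (norm := module) c1
    | linear_combination (norm := module) c3
    | linear_combination (norm := module) (-1 : ℤ) • c7
    | linear_combination (norm := module) (-1 : ℤ) • c8
    | linear_combination (norm := module) key

/-- The Klein four-group, written multiplicatively. -/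
abbrev KleinFour := Multiplicative (ZMod 2 × ZMod 2)

/-- The trivial `ℤ`-linear representation of the Klein four-group on `ℝˣ`. -/
noncomputable abbrev trivialRealUnits : Rep ℤ KleinFour := Rep.trivial ℤ KleinFour (Additive ℝˣ)

/-- The sign of `f (g, g) / f (1, 1)` for a 2-cocycle `f`. It is the class modulo squares of the
square of any lift of `g` to the central extension defined by `f`. -/
noncomputable def diagSign (g : ZMod 2 × ZMod 2) : cocycles₂ trivialRealUnits →+ ZMod 2 where
  toFun f := realSignHom (f.1 (.ofAdd g, .ofAdd g) - f.1 (1, 1))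
  map_zero' := by
    change realSignHom (0 - 0) = 0
    simp
  map_add' x y := by
    rw [← map_add]
    congr 1
    simp only [Submodule.coe_add, Pi.add_apply]
    abel

/-- The triple of signs `diagSign g` at the three nontrivial elements of the Klein four-group. -/
noncomputable def squareSigns : cocycles₂ trivialRealUnits →+ ZMod 2 × ZMod 2 × ZMod 2 :=
  (diagSign (1, 0)).prod ((diagSign (0, 1)).prod (diagSign (1, 1)))

lemma squareSigns_eq_zero_iff (f : cocycles₂ trivialRealUnits) :
    squareSigns f = 0 ↔ H2π trivialRealUnits f = 0 := by
  rw [H2π_eq_zero_iff]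
  constructor
  · intro h
    have ha : diagSign (1, 0) f = 0 := congrArg Prod.fst h
    have hb : diagSign (0, 1) f = 0 := congrArg (fun z => z.2.1) h
    have hc : diagSign (1, 1) f = 0 := congrArg (fun z => z.2.2) h
    obtain ⟨x, hx⟩ := exists_cochain_of_diag_eq_double (A := Additive ℝˣ)
      (fun g h => f.1 (.ofAdd g, .ofAdd h))
      (fun g h j => (mem_cocycles₂_iff f.1).1 f.2 (.ofAdd g) (.ofAdd h) (.ofAdd j))
      (fun _ => add_self_eq_zero_of_four_mul_eq_zero) (fun g => by
        apply exists_add_self_of_realSignHom_eq_zero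
        have hall : ∀ g : ZMod 2 × ZMod 2, g = 0 ∨ g = (1,0) ∨ g = (0,1) ∨ g = (1,1) := by decide
        rcases hall g with rfl | rfl | rfl | rfl
        · simp
        · exact ha
        · exact hb
        · exact hc)
    exact ⟨fun g => x g.toAdd, funext fun p => hx p.1.toAdd p.2.toAdd⟩
  · rintro ⟨x, hx⟩
    have hd (g : ZMod 2 × ZMod 2) : diagSign g f = 0 := by
      have hgg : (Multiplicative.ofAdd g : KleinFour) * .ofAdd g = 1 := by
        have : ∀ g : ZMod 2 × ZMod 2, g + g = 0 := by decide
        exact this g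
      have e (p q : KleinFour) : f.1 (p, q) = (x q - x (p * q) + x p : Additive ℝˣ) :=
        (congrFun hx (p, q)).symm
      have h2 : ∀ z : ZMod 2, z + z = 0 := by decide
      have : diagSign g f = realSignHom ((x (.ofAdd g) - x 1 : Additive ℝˣ) +
          (x (.ofAdd g) - x 1 : Additive ℝˣ)) := by
        change realSignHom (f.1 (_, _) - f.1 (1, 1)) = _
        rw [e, e, hgg, one_mul]
        congr 1
        abel
      rw [this, map_add, h2]
    change (diagSign (1, 0) f, diagSign (0, 1) f, diagSign (1, 1) f) = 0
    simp [hd]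

lemma squareSigns_surjective : Function.Surjective squareSigns := by
  rintro ⟨p, r, t⟩
  -- A bilinear form whose values `B g g` at `(1,0)`, `(0,1)`, `(1,1)` are `p`, `r`, `t`.
  let B (g h : KleinFour) : ZMod 2 := p * g.toAdd.1 * h.toAdd.1 + r * g.toAdd.2 * h.toAdd.2 +
    (t - p - r) * g.toAdd.1 * h.toAdd.2
  refine ⟨⟨fun q => negOneHom (B q.1 q.2), ?_⟩, ?_⟩
  · rw [mem_cocycles₂_iff]
    intro g h j
    change negOneHom _ + negOneHom _ = negOneHom _ + negOneHom _
    rw [← map_add, ← map_add]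
    congr 1
    simp only [B, toAdd_mul, Prod.fst_add, Prod.snd_add]
    ring
  · have hd (g : ZMod 2 × ZMod 2) (hq) : diagSign g ⟨fun q => negOneHom (B q.1 q.2), hq⟩ =
        B (.ofAdd g) (.ofAdd g) := by
      change realSignHom (negOneHom _ - negOneHom _) = _
      rw [← map_sub, realSignHom_negOneHom]
      simp [B]
    change (diagSign (1, 0) _, diagSign (0, 1) _, diagSign (1, 1) _) = _
    simp only [hd]
    simp [B]

/-- `H²((ℤ/2ℤ)², ℝˣ)` with trivial action is `(ℤ/2ℤ)³`. -/
theorem stmt_13 :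
    Nonempty ((groupCohomology
      (Rep.trivial ℤ (Multiplicative (ZMod 2 × ZMod 2)) (Additive ℝˣ)) 2) ≃+
      (ZMod 2 × ZMod 2 × ZMod 2)) := by
  let π : cocycles₂ trivialRealUnits →+ groupCohomology trivialRealUnits 2 :=
    (H2π trivialRealUnits).hom.toAddMonoidHom
  have hπ : Function.Surjective π := fun x => H2_induction_on x fun y => ⟨y, rfl⟩
  have hker : π.ker = squareSigns.ker := by
    ext f
    exact (squareSigns_eq_zero_iff f).symm
  exact ⟨(QuotientAddGroup.quotientKerEquivOfSurjective π hπ).symm.trans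
    ((QuotientAddGroup.quotientAddEquivOfEq hker).trans
      (QuotientAddGroup.quotientKerEquivOfSurjective squareSigns squareSigns_surjective))⟩
end
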